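/- arXiv:math/0506443 — 2 statements merged into one kernel-verified Lean document; each statement's English description precedes it below -/
import Mathlib

section
/- The subgroup of SL(2,ℤ) generated by the matrices A = [[1,1],[0,1]] and B⁴ = [[1,0],[-4,1]] has finite index in SL(2,ℤ). -/
/-- The matrix `A = [[1,1],[0,1]]` as an element of `SL(2,ℤ)`. -/
def A : Matrix.SpecialLinearGroup (Fin 2) ℤ :=
  ⟨!![1, 1; 0, 1], by norm_num [Matrix.det_fin_two_of]⟩

/-- The matrix `B = [[1,0],[-1,1]]` as an element of `SL(2,ℤ)`. -/
def B : Matrix.SpecialLinearGroup (Fin 2) ℤ :=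
  ⟨!![1, 0; -1, 1], by norm_num [Matrix.det_fin_two_of]⟩

lemma A_zpow (k : ℤ) : ((A ^ k : Matrix.SpecialLinearGroup (Fin 2) ℤ) : Matrix (Fin 2) (Fin 2) ℤ)
    = !![1, k; 0, 1] := by
  have h : A = ModularGroup.T := by ext i j; fin_cases i <;> fin_cases j <;> rfl
  rw [h, ModularGroup.coe_T_zpow]

lemma B_zpow (k : ℤ) : ((B ^ k : Matrix.SpecialLinearGroup (Fin 2) ℤ) : Matrix (Fin 2) (Fin 2) ℤ)
    = !![1, 0; -k, 1] := by
  have h : B = ModularGroup.S * ModularGroup.T * ModularGroup.S⁻¹ := by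
    apply Subtype.ext
    rw [Matrix.SpecialLinearGroup.coe_mul, Matrix.SpecialLinearGroup.coe_mul,
      Matrix.SpecialLinearGroup.coe_inv, ModularGroup.coe_S, ModularGroup.coe_T,
      Matrix.adjugate_fin_two_of]
    simp [B]
  rw [h, conj_zpow]
  rw [Matrix.SpecialLinearGroup.coe_mul, Matrix.SpecialLinearGroup.coe_mul,
      Matrix.SpecialLinearGroup.coe_inv, ModularGroup.coe_S, ModularGroup.coe_T_zpow,
      Matrix.adjugate_fin_two_of]
  simp

lemma exists_reduce (a m : ℤ) (hm : m ≠ 0) : ∃ k : ℤ, 2 * |a + k * m| ≤ |m| := by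
  have h1 := Int.emod_nonneg a hm
  have h2 := Int.emod_lt_abs a hm
  have h3 := Int.mul_ediv_add_emod a m
  by_cases h : 2 * (a % m) ≤ |m|
  · refine ⟨-(a / m), ?_⟩
    have : a + -(a / m) * m = a % m := by linarith
    rw [this, abs_of_nonneg h1]; exact h
  · refine ⟨-(a / m) - m.sign, ?_⟩
    have h4 := Int.sign_mul_self_eq_abs m
    have : a + (-(a / m) - m.sign) * m = a % m - |m| := by linarith
    rw [this, abs_of_nonpos (by linarith)]; linarith

lemma mem_closure_aux (n : ℕ) : ∀ g : Matrix.SpecialLinearGroup (Fin 2) ℤ,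
    (g 1 0).natAbs = n → (4 : ℤ) ∣ g 1 0 → (4 : ℤ) ∣ g 0 0 - 1 →
    g ∈ Subgroup.closure ({A, B ^ 4} : Set (Matrix.SpecialLinearGroup (Fin 2) ℤ)) := by
  induction n using Nat.strong_induction_on with
  | _ n ih =>
  intro g hn hc ha
  have hA : A ∈ Subgroup.closure ({A, B ^ 4} : Set (Matrix.SpecialLinearGroup (Fin 2) ℤ)) :=
    Subgroup.subset_closure (by simp)
  have hB : B ^ 4 ∈ Subgroup.closure ({A, B ^ 4} : Set (Matrix.SpecialLinearGroup (Fin 2) ℤ)) :=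
    Subgroup.subset_closure (by simp)
  have hdet : g 0 0 * g 1 1 - g 0 1 * g 1 0 = 1 := by
    rw [← Matrix.det_fin_two]; exact g.det_coe
  by_cases h0 : g 1 0 = 0
  · rw [h0] at hdet
    have h1 : g 0 0 * g 1 1 = 1 := by linarith
    have h00 : g 0 0 = 1 := by
      rcases Int.eq_one_or_neg_one_of_mul_eq_one h1 with h | h
      · exact h
      · rw [h] at ha; omega
    have h11 : g 1 1 = 1 := by rw [h00] at h1; linarith
    have : g = A ^ (g 0 1) := by
      ext i j
      rw [A_zpow]
      fin_cases i <;> fin_cases j <;> simp [h0, h00, h11]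
    rw [this]
    exact Subgroup.zpow_mem _ hA _
  · obtain ⟨k, hk⟩ := exists_reduce (g 0 0) (g 1 0) h0
    obtain ⟨c, hc'⟩ := hc
    obtain ⟨a, ha'⟩ := ha
    set x := g 0 0 + k * g 1 0 with hx
    have hx4 : x = 4 * (a + k * c) + 1 := by rw [hx, hc']; linarith
    have hx0 : x ≠ 0 := by omega
    obtain ⟨l, hl⟩ := exists_reduce (g 1 0) (4 * x) (by omega)
    have hBl : (B ^ 4) ^ (-l) = B ^ (-4 * l) := by
      rw [← zpow_natCast, ← zpow_mul]; congr 1; push_cast; ring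
    have e10 : ((B ^ 4) ^ (-l) * (A ^ k * g)) 1 0 = g 1 0 + l * (4 * x) := by
      rw [hBl]
      simp [B_zpow, A_zpow, Matrix.vecMul, dotProduct, Matrix.mul_apply, Fin.sum_univ_two]
      rw [hx]; ring
    have e00 : ((B ^ 4) ^ (-l) * (A ^ k * g)) 0 0 = x := by
      rw [hBl]
      simp [B_zpow, A_zpow, Matrix.vecMul, dotProduct, Matrix.mul_apply, Fin.sum_univ_two]
      rw [hx]
    have hlt : (((B ^ 4) ^ (-l) * (A ^ k * g)) 1 0).natAbs < n := by
      rw [e10, ← hn]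
      generalize g 1 0 + l * (4 * x) = y at hl
      rw [Int.abs_eq_natAbs, Int.abs_eq_natAbs] at hl hk
      omega
    have := ih _ hlt _ rfl (by rw [e10, hc']; exact ⟨c + l * x, by ring⟩)
      (by rw [e00, hx4]; exact ⟨a + k * c, by ring⟩)
    rw [Subgroup.mul_mem_cancel_left _ (Subgroup.zpow_mem _ hB _),
      Subgroup.mul_mem_cancel_left _ (Subgroup.zpow_mem _ hA _)] at this
    exact this

/-- The subgroup of `SL(2,ℤ)` generated by `A` and `B⁴` has finite index. -/
theorem subgroup_A_Bfourth_finiteIndex :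
    (Subgroup.closure ({A, B ^ 4} : Set (Matrix.SpecialLinearGroup (Fin 2) ℤ))).FiniteIndex := by
  have hle : CongruenceSubgroup.Gamma 4 ≤
      Subgroup.closure ({A, B ^ 4} : Set (Matrix.SpecialLinearGroup (Fin 2) ℤ)) := by
    intro g hg
    rw [CongruenceSubgroup.Gamma_mem] at hg
    obtain ⟨h00, -, h10, -⟩ := hg
    refine mem_closure_aux _ g rfl ?_ ?_
    · exact (ZMod.intCast_zmod_eq_zero_iff_dvd _ 4).1 h10
    · refine (ZMod.intCast_zmod_eq_zero_iff_dvd _ 4).1 ?_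
      push_cast
      rw [h00]; simp
  exact Subgroup.finiteIndex_of_le hle
end

section
/- The subgroup of SL(2,ℤ) generated by the matrices A = [[1,1],[0,1]] and B⁴ = [[1,0],[-4,1]] has index exactly 12 in SL(2,ℤ). -/
abbrev SLZ := Matrix.SpecialLinearGroup (Fin 2) ℤ

def Apow (k : ℤ) : SLZ := ⟨!![1, k; 0, 1], by norm_num [Matrix.det_fin_two_of]⟩
def Bpow (k : ℤ) : SLZ := ⟨!![1, 0; -k, 1], by norm_num [Matrix.det_fin_two_of]⟩

lemma Apow_coe (k : ℤ) : (Apow k : Matrix (Fin 2) (Fin 2) ℤ) = !![1, k; 0, 1] := rfl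
lemma Bpow_coe (k : ℤ) : (Bpow k : Matrix (Fin 2) (Fin 2) ℤ) = !![1, 0; -k, 1] := rfl

lemma Apow_add (k l : ℤ) : Apow (k + l) = Apow k * Apow l := by
  ext i j
  fin_cases i <;> fin_cases j <;> simp [Apow_coe, Matrix.mul_apply, Fin.sum_univ_two, add_comm]

lemma Bpow_add (k l : ℤ) : Bpow (k + l) = Bpow k * Bpow l := by
  ext i j
  fin_cases i <;> fin_cases j <;> simp [Bpow_coe, Matrix.mul_apply, Fin.sum_univ_two, add_comm]

lemma Apow_zero : Apow 0 = 1 := by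
  ext i j
  fin_cases i <;> fin_cases j <;> simp [Apow]

lemma Bpow_zero : Bpow 0 = 1 := by
  ext i j
  fin_cases i <;> fin_cases j <;> simp [Bpow]

lemma Bpow_four : B ^ 4 = Bpow 4 := by
  have : B = Bpow 1 := rfl
  rw [this, show (4 : ℤ) = 1 + 1 + 1 + 1 by norm_num, Bpow_add, Bpow_add, Bpow_add]
  simp only [pow_succ, pow_zero, one_mul]

def HH : Subgroup SLZ := Subgroup.closure ({A, B ^ 4} : Set SLZ)

lemma Apow_one_mem : Apow 1 ∈ HH := Subgroup.subset_closure (Or.inl rfl)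

lemma Bpow_four_mem : Bpow 4 ∈ HH := by
  rw [← Bpow_four]; exact Subgroup.subset_closure (Or.inr rfl)

lemma Apow_neg_mem : Apow (-1) ∈ HH := by
  have h : Apow 1 * Apow (-1) = 1 := by rw [← Apow_add, ← Apow_zero]; rfl
  rw [← inv_eq_of_mul_eq_one_right h]
  exact HH.inv_mem Apow_one_mem

lemma Bpow_neg_mem : Bpow (-4) ∈ HH := by
  have h : Bpow 4 * Bpow (-4) = 1 := by rw [← Bpow_add, ← Bpow_zero]; rfl
  rw [← inv_eq_of_mul_eq_one_right h]
  exact HH.inv_mem Bpow_four_mem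

lemma Apow_mem (k : ℤ) : Apow k ∈ HH := by
  induction k using Int.induction_on with
  | zero => rw [Apow_zero]; exact HH.one_mem
  | succ n ih => rw [Apow_add]; exact HH.mul_mem ih Apow_one_mem
  | pred n ih => rw [sub_eq_add_neg, Apow_add]; exact HH.mul_mem ih Apow_neg_mem

lemma mul_Apow (g : SLZ) (k : ℤ) : (g * Apow k) 1 0 = g 1 0 ∧
    (g * Apow k) 1 1 = g 1 0 * k + g 1 1 := by
  simp [Apow_coe, Matrix.mul_apply, Fin.sum_univ_two]

lemma mul_Bpow (g : SLZ) (k : ℤ) : (g * Bpow k) 1 0 = g 1 0 - g 1 1 * k ∧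
    (g * Bpow k) 1 1 = g 1 1 := by
  simp [Bpow_coe, Matrix.mul_apply, Fin.sum_univ_two, sub_eq_add_neg]

lemma mem_of (n : ℕ) : ∀ g : SLZ, (g 1 0).natAbs + (g 1 1).natAbs ≤ n →
    g 1 0 % 4 = 0 → g 1 1 % 4 = 1 → g ∈ HH := by
  induction n with
  | zero => intro g h1 h2 h3; omega
  | succ n ih =>
    intro g h1 h2 h3
    have step : ∀ x ∈ HH, g * x ∈ HH → g ∈ HH := fun x hx h => (HH.mul_mem_cancel_right hx).1 h
    by_cases hc : g 1 0 = 0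
    · have hd := g.2
      rw [Matrix.det_fin_two] at hd
      change g 0 0 * g 1 1 - g 0 1 * g 1 0 = 1 at hd
      rw [hc, mul_zero, sub_zero] at hd
      have h11 : g 1 1 = 1 := by
        rcases Int.isUnit_iff.1 (IsUnit.of_mul_eq_one_right _ hd) with h | h <;> omega
      rw [h11, mul_one] at hd
      have : g = Apow (g 0 1) := by
        ext i j
        fin_cases i <;> fin_cases j <;> simp [Apow, hd, hc, h11]
      rw [this]
      exact Apow_mem _
    · have a1 := mul_Apow g 1
      have a2 := mul_Apow g (-1)
      have b1 := mul_Bpow g 4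
      have b2 := mul_Bpow g (-4)
      have key : (g 1 1 + g 1 0).natAbs < (g 1 1).natAbs ∨ (g 1 1 - g 1 0).natAbs < (g 1 1).natAbs
        ∨ (g 1 0 - 4 * g 1 1).natAbs < (g 1 0).natAbs
        ∨ (g 1 0 + 4 * g 1 1).natAbs < (g 1 0).natAbs := by omega
      rcases key with h | h | h | h
      · exact step _ Apow_one_mem (ih _ (by omega) (by omega) (by omega))
      · exact step _ Apow_neg_mem (ih _ (by omega) (by omega) (by omega))
      · exact step _ Bpow_four_mem (ih _ (by omega) (by omega) (by omega))
      · exact step _ Bpow_neg_mem (ih _ (by omega) (by omega) (by omega))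

/-- `SL(2,ℤ)` acts on column vectors mod 4. -/
@[reducible] def act4 : MulAction SLZ (ZMod 4 × ZMod 4) where
  smul g v := ((g 0 0 : ZMod 4) * v.1 + (g 0 1 : ZMod 4) * v.2,
    (g 1 0 : ZMod 4) * v.1 + (g 1 1 : ZMod 4) * v.2)
  one_smul v := by
    change (_, _) = v
    simp
  mul_smul g h v := by
    change (_, _) = ((g 0 0 : ZMod 4) * (_ * _ + _ * _) + (g 0 1 : ZMod 4) * (_ * _ + _ * _),
      (g 1 0 : ZMod 4) * (_ * _ + _ * _) + (g 1 1 : ZMod 4) * (_ * _ + _ * _))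
    simp [Matrix.mul_apply, Fin.sum_univ_two]
    constructor <;> ring

attribute [local instance] act4

lemma smul_def4 (g : SLZ) (v : ZMod 4 × ZMod 4) :
    g • v = ((g 0 0 : ZMod 4) * v.1 + (g 0 1 : ZMod 4) * v.2,
    (g 1 0 : ZMod 4) * v.1 + (g 1 1 : ZMod 4) * v.2) := rfl

lemma HH_eq : HH = MulAction.stabilizer SLZ ((1, 0) : ZMod 4 × ZMod 4) := by
  apply le_antisymm
  · rw [HH, Subgroup.closure_le]
    rintro x (rfl | rfl)
    · change Apow 1 • _ = _
      simp [smul_def4, Apow_coe]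
    · rw [Bpow_four]
      change Bpow 4 • _ = _
      simp [smul_def4, Bpow_coe]
      rfl
  · intro g hg
    rw [MulAction.mem_stabilizer_iff, smul_def4] at hg
    simp only [mul_one, mul_zero, add_zero, Prod.mk.injEq] at hg
    obtain ⟨h0, h1⟩ := hg
    have hd := g.2
    rw [Matrix.det_fin_two] at hd
    change g 0 0 * g 1 1 - g 0 1 * g 1 0 = 1 at hd
    have hd' := congrArg (Int.cast : ℤ → ZMod 4) hd
    push_cast at hd'
    rw [h0, h1, one_mul, mul_zero, sub_zero] at hd'
    have e1 : g 1 0 % 4 = 0 := by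
      have := (ZMod.intCast_eq_intCast_iff (g 1 0) 0 4).1 (by simpa using h1)
      exact this
    have e2 : g 1 1 % 4 = 1 := by
      have := (ZMod.intCast_eq_intCast_iff (g 1 1) 1 4).1 (by simpa using hd')
      exact this
    exact mem_of _ g le_rfl e1 e2

def S12 : Finset (ZMod 4 × ZMod 4) := Finset.univ.filter fun v => ∃ x y : ZMod 4, v.1 * x - y * v.2 = 1

lemma orbit_eq : MulAction.orbit SLZ ((1, 0) : ZMod 4 × ZMod 4) = (S12 : Set _) := by
  apply Set.Subset.antisymm
  · rintro _ ⟨g, rfl⟩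
    have hd := g.2
    rw [Matrix.det_fin_two] at hd
    change g 0 0 * g 1 1 - g 0 1 * g 1 0 = 1 at hd
    have hd' := congrArg (Int.cast : ℤ → ZMod 4) hd
    push_cast at hd'
    simp only [S12, Finset.coe_filter, Finset.mem_univ, true_and, Set.mem_ofPred_eq]
    refine ⟨g 1 1, g 0 1, ?_⟩
    simpa [smul_def4] using hd'
  · have key : ∀ v ∈ S12, ∃ p q r : Fin 4,
        v = (((1 - p.1 * q.1 : ℤ) : ZMod 4), ((-q.1 - r.1 * (1 - p.1 * q.1) : ℤ) : ZMod 4)) := by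
      decide
    intro v hv
    obtain ⟨p, q, r, h⟩ := key v hv
    refine ⟨Bpow r.1 * Apow p.1 * Bpow q.1, ?_⟩
    rw [h]
    change (_, _) = (_, _)
    simp [Apow_coe, Bpow_coe, Matrix.mul_apply, Fin.sum_univ_two]
    constructor <;> ring

/-- The subgroup of `SL(2,ℤ)` generated by `A` and `B⁴` has index exactly 12. -/
theorem subgroup_A_Bfourth_index_eq_twelve :
    (Subgroup.closure ({A, B ^ 4} : Set (Matrix.SpecialLinearGroup (Fin 2) ℤ))).index = 12 := by
  change HH.index = 12
  rw [HH_eq, MulAction.index_stabilizer, orbit_eq, Set.ncard_coe_finset]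
  decide
end
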